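/- Let n ≥ 4 be even and let M be any set partition of {1,…,n} into two-element blocks (a perfect matching). Then T_M − T_{P₀} lies in the ℚ-linear span of {t_σ : σ ∈ Sₙ}, where P₀ = {{1,2},{3,4},…,{n−1,n}}. (Concrete form of the lemma: the weight system value of any disjoint union of struts is congruent to c^{⊗ n/2} modulo the image of the weight system on connected trees.) -/

import Mathlib

/- Let n = 2m ≥ 4 be even and M a perfect matching of {1,…,n} (a set partition
   into two-element blocks).  Then T_M − T_{P₀} lies in the ℚ-span of the
   tensors t_σ (σ ∈ Sₙ), where P₀ = {{1,2},{3,4},…,{n−1,n}}; the tensor T_{P₀}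
   is characterized by κ^{⊗n}(T_{P₀}, x₁⊗⋯⊗xₙ) = ∏ᵢ κ(x_{2i−1}, x_{2i}).
   κ, T_M, T_{P₀} and the family t are quantified via their defining
   (κ-contraction) properties. -/

open scoped TensorProduct

set_option synthInstance.maxHeartbeats 1000000
set_option maxHeartbeats 1000000

noncomputable section

abbrev sl2 : Type := ↥(LieAlgebra.SpecialLinear.sl (Fin 2) ℚ)

def H : sl2 :=
  ⟨!![1, 0; 0, -1], show _ ∈ LinearMap.ker (Matrix.traceLinearMap (Fin 2) ℚ ℚ) from
    LinearMap.mem_ker.2 (by simp [Matrix.trace_fin_two])⟩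

def E : sl2 :=
  ⟨!![0, 1; 0, 0], show _ ∈ LinearMap.ker (Matrix.traceLinearMap (Fin 2) ℚ ℚ) from
    LinearMap.mem_ker.2 (by simp [Matrix.trace_fin_two])⟩

def F : sl2 :=
  ⟨!![0, 0; 1, 0], show _ ∈ LinearMap.ker (Matrix.traceLinearMap (Fin 2) ℚ ℚ) from
    LinearMap.mem_ker.2 (by simp [Matrix.trace_fin_two])⟩

/-- The n-fold tensor power sl₂^{⊗n}. -/
abbrev TP (n : ℕ) : Type := ⨂[ℚ] (_ : Fin n), sl2

/-- The adjoint action of `x ∈ sl₂` on `sl₂^{⊗n}`, extended as a derivation. -/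
def actOn (n : ℕ) (x : sl2) : TP n →ₗ[ℚ] TP n :=
  ∑ i : Fin n,
    PiTensorProduct.map (fun j => if j = i then LieAlgebra.ad ℚ sl2 x else LinearMap.id)

/-- The space of invariant tensors of `sl₂^{⊗n}`. -/
def Invariants (n : ℕ) : Submodule ℚ (TP n) :=
  ⨅ x : sl2, LinearMap.ker (actOn n x)

/-- Pairing of `sl₂^{⊗n}` against `x₁ ⊗ ⋯ ⊗ xₙ` via `κ^{⊗n}`:
on pure tensors, `pairT κ n x (a₁ ⊗ ⋯ ⊗ aₙ) = ∏ i, κ(aᵢ, xᵢ)`. -/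
def pairT (κ : sl2 →ₗ[ℚ] sl2 →ₗ[ℚ] ℚ) (n : ℕ) (x : Fin n → sl2) : TP n →ₗ[ℚ] ℚ :=
  PiTensorProduct.lift
    ((MultilinearMap.mkPiAlgebra ℚ (Fin n) ℚ).compLinearMap fun i => κ.flip (x i))

/-- Left-iterated Lie bracket of a list: `[[⋯[a₁,a₂],⋯],a_k]`. -/
def lBrk : List sl2 → sl2
  | [] => 0
  | a :: l => l.foldl (fun y z => ⁅y, z⁆) a

/-- `κ([[⋯[x₁,x₂],⋯],x_{k-1}], x_k)`, read as `κ(x₁,x₂)` when `k = 2`. -/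
def brkVal (κ : sl2 →ₗ[ℚ] sl2 →ₗ[ℚ] ℚ) {k : ℕ} (x : Fin k → sl2) : ℚ :=
  κ (lBrk (List.ofFn x).dropLast) ((List.ofFn x).getLastD 0)

/-- For a block `B = {j₁ < ⋯ < j_k}`: `κ([[⋯[x_{j₁},x_{j₂}],⋯],x_{j_{k−1}}], x_{j_k})`. -/
def blockVal (κ : sl2 →ₗ[ℚ] sl2 →ₗ[ℚ] ℚ) {n : ℕ} (x : Fin n → sl2)
    (B : Finset (Fin n)) : ℚ :=
  κ (lBrk (((B.sort (· ≤ ·)).map x).dropLast)) (((B.sort (· ≤ ·)).map x).getLastD 0)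

/-- `P` is a set partition of `Fin n` all of whose blocks have ≥ 2 elements. -/
def IsPartitionGe2 (n : ℕ) (P : Finset (Finset (Fin n))) : Prop :=
  (∀ i : Fin n, ∃! B, B ∈ P ∧ i ∈ B) ∧ (∀ B ∈ P, 2 ≤ B.card)

/-!
Regard a tensor as the function `x ↦ κ^{⊗n}(T, x₁ ⊗ ⋯ ⊗ xₙ)`, so that `T_M` becomes a product of
struts `κ(xᵢ, xⱼ)` and `t_σ` becomes a comb. In `sl₂` the double bracket is
`[[a,b],c] = 2 (κ(b,c) a - κ(a,c) b)`, so a comb `[a,b,c,d,…]` is twice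
`κ(b,c) [a,d,…] - κ(a,c) [b,d,…]`.

For combs with at least three leaves, three instances of this identity and antisymmetry in the first
two leaves express a strut times a comb through longer combs. Hence the difference of two products
of struts is a combination of combs as soon as it is so after removing a common strut, and the case
of two struts is `[a,d,c,b] = 2 (κ(a,b) κ(c,d) - κ(a,c) κ(b,d))`.
-/

open Module

section Combs

variable {R L ι : Type*} [CommRing R] [LieRing L] [LieAlgebra R L]

/-- A symmetric bilinear form through which double brackets are expressed as for the trace form of
`sl₂`. Replacing the factor `2` by another unit only rescales `κ` when `2` is invertible. -/
structure IsDoubleBracketForm (κ : LinearMap.BilinForm R L) : Prop where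
  isSymm : κ.IsSymm
  lie_lie (a b c : L) : ⁅⁅a, b⁆, c⁆ = (2 : R) • (κ b c • a - κ a c • b)

/-- The comb `κ([⋯[[a,b₁],b₂]⋯,b_{k-1}], b_k)` as a linear functional of its first leaf `a`, with
`0` as the value on the empty list of remaining leaves. -/
def combFunctional (κ : LinearMap.BilinForm R L) : List L → L →ₗ[R] R
  | [] => 0
  | [b] => κ.flip b
  | b :: c :: l => combFunctional κ (c :: l) ∘ₗ (-LieAlgebra.ad R L b)

/-- The comb `κ([⋯[a₁,a₂]⋯,a_{k-1}], a_k)` on a list of leaves. Lists with fewer than two leaves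
have value `0`. -/
def combForm (κ : LinearMap.BilinForm R L) : List L → R
  | [] => 0
  | a :: l => combFunctional κ l a

/-- The comb whose leaves carry the labels in `l`, as a function of the labelled elements. -/
def comb (κ : LinearMap.BilinForm R L) (l : List ι) : (ι → L) → R :=
  fun x => combForm κ (l.map x)

/-- The strut `κ(xᵢ, xⱼ)` joining the labels `i` and `j`. -/
def strut (κ : LinearMap.BilinForm R L) (p : ι × ι) : (ι → L) → R :=
  fun x => κ (x p.1) (x p.2)

/-- The disjoint union of a multiset of struts. -/
def strutProd (κ : LinearMap.BilinForm R L) (s : Multiset (ι × ι)) : (ι → L) → R :=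
  (s.map (strut κ)).prod

/-- The labels used by a multiset of struts. -/
def endpoints (s : Multiset (ι × ι)) : Multiset ι :=
  s.bind fun p => {p.1, p.2}

/-- The span of the combs with label multiset `s`. Only combs with at least three leaves are
admitted: multiplication by a strut does not preserve the span of the two-leaf combs. -/
def combSpan (κ : LinearMap.BilinForm R L) (s : Multiset ι) : Submodule R ((ι → L) → R) :=
  Submodule.span R {f | ∃ l : List ι, 3 ≤ l.length ∧ (l : Multiset ι) = s ∧ f = comb κ l}

@[simp]
theorem strutProd_cons (κ : LinearMap.BilinForm R L) (p : ι × ι) (s : Multiset (ι × ι)) :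
    strutProd κ (p ::ₘ s) = strut κ p * strutProd κ s := by
  simp [strutProd]

@[simp]
theorem endpoints_cons (p : ι × ι) (s : Multiset (ι × ι)) :
    endpoints (p ::ₘ s) = p.1 ::ₘ p.2 ::ₘ endpoints s := by
  rw [endpoints, Multiset.cons_bind, Multiset.insert_eq_cons, Multiset.cons_add,
    Multiset.singleton_add, ← endpoints]

variable {κ : LinearMap.BilinForm R L}

theorem combFunctional_cons_cons (a b c : L) (l : List L) :
    combFunctional κ (b :: c :: l) a = combFunctional κ (c :: l) ⁅a, b⁆ := by
  rw [← lie_skew]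
  rfl

theorem comb_pair (a b : ι) : comb κ [a, b] = strut κ (a, b) := rfl

theorem comb_swap (a b c : ι) (l : List ι) :
    comb κ (a :: b :: c :: l) = -comb κ (b :: a :: c :: l) := by
  funext x
  simp only [comb, combForm, List.map_cons, Pi.neg_apply, combFunctional_cons_cons]
  rw [← lie_skew, map_neg]

theorem comb_mem_combSpan {l : List ι} {s : Multiset ι} (hl : 3 ≤ l.length)
    (hs : (l : Multiset ι) = s) : comb κ l ∈ combSpan κ s :=
  Submodule.subset_span ⟨l, hl, hs, rfl⟩

namespace IsDoubleBracketForm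

theorem strut_swap (hκ : IsDoubleBracketForm κ) (i j : ι) : strut κ (i, j) = strut κ (j, i) :=
  funext fun x => hκ.isSymm.eq (x i) (x j)

theorem comb_cons_cons_cons (hκ : IsDoubleBracketForm κ) (a b c d : ι) (l : List ι) :
    comb κ (a :: b :: c :: d :: l) =
      (2 : R) • (strut κ (b, c) * comb κ (a :: d :: l) -
        strut κ (a, c) * comb κ (b :: d :: l)) := by
  funext x
  simp only [comb, combForm, List.map_cons, combFunctional_cons_cons, hκ.lie_lie, map_smul, map_sub,
    smul_eq_mul, Pi.smul_apply, Pi.sub_apply, Pi.mul_apply, strut]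

theorem exists_cons_of_mem_endpoints (hκ : IsDoubleBracketForm κ) {a : ι} {s : Multiset (ι × ι)}
    (ha : a ∈ endpoints s) :
    ∃ c t, strutProd κ s = strutProd κ ((a, c) ::ₘ t) ∧ endpoints s = endpoints ((a, c) ::ₘ t) := by
  obtain ⟨⟨i, j⟩, hp, hij⟩ := Multiset.mem_bind.1 ha
  obtain ⟨t, rfl⟩ := Multiset.exists_cons_of_mem hp
  obtain rfl | rfl : a = i ∨ a = j := by simpa using hij
  · exact ⟨j, t, rfl, rfl⟩
  · exact ⟨i, t, by simp [hκ.strut_swap i a], by simp [Multiset.cons_swap]⟩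

variable [Invertible (2 : R)]

theorem strut_mul_comb_sub_mem (hκ : IsDoubleBracketForm κ) (a b c d e : ι) (l : List ι)
    {s : Multiset ι} (hs : ((a :: b :: c :: d :: e :: l : List ι) : Multiset ι) = s) :
    strut κ (b, c) * comb κ (a :: d :: e :: l) - strut κ (a, c) * comb κ (b :: d :: e :: l) ∈
      combSpan κ s := by
  have hmem : comb κ (a :: b :: c :: d :: e :: l) ∈ combSpan κ s := comb_mem_combSpan (by simp) hs
  rw [hκ.comb_cons_cons_cons] at hmem
  exact (Submodule.smul_mem_iff_of_isUnit _ (isUnit_of_invertible 2)).1 hmem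

theorem strut_mul_comb_mem (hκ : IsDoubleBracketForm κ) (a b c d e : ι) (l : List ι) :
    strut κ (b, c) * comb κ (a :: d :: e :: l) ∈
      combSpan κ (b ::ₘ c ::ₘ ((a :: d :: e :: l : List ι) : Multiset ι)) := by
  let W := combSpan κ (b ::ₘ c ::ₘ ((a :: d :: e :: l : List ι) : Multiset ι))
  have h_ab : strut κ (b, c) * comb κ (a :: d :: e :: l) -
      strut κ (a, c) * comb κ (b :: d :: e :: l) ∈ W :=
    hκ.strut_mul_comb_sub_mem a b c d e l (by
      simp only [← Multiset.cons_coe, ← Multiset.singleton_add]; abel)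
  have h_da : strut κ (a, c) * comb κ (d :: b :: e :: l) -
      strut κ (d, c) * comb κ (a :: b :: e :: l) ∈ W :=
    hκ.strut_mul_comb_sub_mem d a c b e l (by
      simp only [← Multiset.cons_coe, ← Multiset.singleton_add]; abel)
  have h_bd : strut κ (d, c) * comb κ (b :: a :: e :: l) -
      strut κ (b, c) * comb κ (d :: a :: e :: l) ∈ W :=
    hκ.strut_mul_comb_sub_mem b d c a e l (by
      simp only [← Multiset.cons_coe, ← Multiset.singleton_add]; abel)
  refine (Submodule.smul_mem_iff_of_isUnit W (isUnit_of_invertible (2 : R))).1 ?_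
  convert W.add_mem (W.sub_mem h_ab h_da) h_bd using 1
  rw [comb_swap d b e l, comb_swap b a e l, comb_swap d a e l, two_smul]
  ring

theorem strut_mul_mem (hκ : IsDoubleBracketForm κ) (p : ι × ι) {s : Multiset ι}
    {f : (ι → L) → R} (hf : f ∈ combSpan κ s) :
    strut κ p * f ∈ combSpan κ (p.1 ::ₘ p.2 ::ₘ s) := by
  suffices h : combSpan κ s ≤
      (combSpan κ (p.1 ::ₘ p.2 ::ₘ s)).comap (LinearMap.mulLeft R (strut κ p)) from h hf
  refine Submodule.span_le.2 ?_
  rintro _ ⟨l, hl, rfl, rfl⟩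
  match l, hl with
  | a :: d :: e :: l, _ => exact hκ.strut_mul_comb_mem a p.1 p.2 d e l

theorem strutProd_mul_mem (hκ : IsDoubleBracketForm κ) (p : Multiset (ι × ι)) {s : Multiset ι}
    {f : (ι → L) → R} (hf : f ∈ combSpan κ s) :
    strutProd κ p * f ∈ combSpan κ (endpoints p + s) := by
  induction p using Multiset.induction_on with
  | empty => simpa [strutProd, endpoints] using hf
  | cons p t ih => simpa [mul_assoc] using hκ.strut_mul_mem p ih

theorem strut_mul_strut_sub_mem (hκ : IsDoubleBracketForm κ) (a b c d : ι) :
    strut κ (a, b) * strut κ (c, d) - strut κ (a, c) * strut κ (b, d) ∈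
      combSpan κ {a, b, c, d} := by
  have hperm : (([a, d, c, b] : List ι) : Multiset ι) = {a, b, c, d} := by
    simp only [← Multiset.cons_coe, Multiset.insert_eq_cons, ← Multiset.singleton_add,
      Multiset.coe_nil]
    abel
  have hmem : comb κ [a, d, c, b] ∈ combSpan κ {a, b, c, d} := comb_mem_combSpan (by simp) hperm
  rw [hκ.comb_cons_cons_cons, comb_pair, comb_pair, hκ.strut_swap d c, hκ.strut_swap d b,
    mul_comm (strut κ (c, d))] at hmem
  exact (Submodule.smul_mem_iff_of_isUnit _ (isUnit_of_invertible 2)).1 hmem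

theorem exists_cons_strutProd_sub_mem (hκ : IsDoubleBracketForm κ) {a b : ι} {u : Multiset ι}
    {s : Multiset (ι × ι)} (hs : endpoints s = a ::ₘ b ::ₘ u) :
    ∃ t, endpoints t = u ∧
      strutProd κ ((a, b) ::ₘ t) - strutProd κ s ∈ combSpan κ (endpoints s) := by
  obtain ⟨c, q, hprod, hends⟩ := hκ.exists_cons_of_mem_endpoints (a := a) (s := s) (by simp [hs])
  have hcq : c ::ₘ endpoints q = b ::ₘ u := by
    simpa [hends] using hs
  obtain rfl | hb : b = c ∨ b ∈ endpoints q := by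
    have : b ∈ c ::ₘ endpoints q := by simp [hcq]
    simpa using this
  · exact ⟨q, by simpa using hcq, by simp [hprod]⟩
  obtain ⟨d, r, hprod', hends'⟩ := hκ.exists_cons_of_mem_endpoints hb
  refine ⟨(c, d) ::ₘ r, ?_, ?_⟩
  · rw [hends', endpoints_cons, Multiset.cons_swap] at hcq
    simpa using hcq
  have hmem := hκ.strutProd_mul_mem r (hκ.strut_mul_strut_sub_mem a b c d)
  have hlabels : endpoints r + {a, b, c, d} = endpoints s := by
    rw [hends, endpoints_cons, hends', endpoints_cons]
    simp only [Multiset.insert_eq_cons, ← Multiset.singleton_add]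
    abel
  rw [hlabels] at hmem
  convert hmem using 1
  simp only [hprod, strutProd_cons, hprod']
  ring

theorem strutProd_sub_mem (hκ : IsDoubleBracketForm κ) {s s' : Multiset (ι × ι)}
    (h : endpoints s = endpoints s') :
    strutProd κ s - strutProd κ s' ∈ combSpan κ (endpoints s) := by
  induction s using Multiset.induction_on generalizing s' with
  | empty =>
    induction s' using Multiset.induction_on with
    | empty => simp
    | cons p s' _ => simp [endpoints] at h
  | cons p s ih =>
    obtain ⟨t, ht, hmem⟩ := hκ.exists_cons_strutProd_sub_mem (h.symm.trans (endpoints_cons p s))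
    rw [← h] at hmem
    have hstrip := hκ.strut_mul_mem p (ih ht.symm)
    rw [← endpoints_cons] at hstrip
    convert Submodule.add_mem _ hstrip hmem using 1
    simp only [strutProd_cons]
    ring

end IsDoubleBracketForm

end Combs

section TensorPairing

variable {R K L ι : Type*} [CommRing R] [Field K] [Fintype ι]

/-- Pairing of `L^{⊗ι}` against `⨂ xᵢ` via `κ^{⊗ι}`. -/
def tensorPairing [AddCommGroup L] [Module R L] (κ : LinearMap.BilinForm R L) :
    (⨂[R] _ : ι, L) →ₗ[R] (ι → L) → R :=
  LinearMap.pi fun x => PiTensorProduct.lift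
    ((MultilinearMap.mkPiAlgebra R ι R).compLinearMap fun i => κ.flip (x i))

theorem tensorPairing_injective [AddCommGroup L] [Module K L] [FiniteDimensional K L]
    {κ : LinearMap.BilinForm K L} (hκ : κ.Nondegenerate) :
    Function.Injective (tensorPairing (ι := ι) κ) := by
  classical
  let b := Module.finBasis K L
  let B : Basis (ι → Fin (finrank K L)) K (⨂[K] _ : ι, L) :=
    Basis.piTensorProduct fun _ => LinearMap.BilinForm.dualBasis κ hκ b
  have hrepr (T : ⨂[K] _ : ι, L) (g : ι → Fin (finrank K L)) :
      B.repr T g = tensorPairing κ T (b ∘ g) := by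
    induction T using PiTensorProduct.induction_on with
    | smul_tprod r a => simp [B, tensorPairing]
    | add S T hS hT => simp [hS, hT]
  intro S T hST
  refine B.ext_elem fun g => ?_
  rw [hrepr, hrepr, hST]

theorem exists_perm_ofFn_eq {n : ℕ} {l : List (Fin n)}
    (hl : (l : Multiset (Fin n)) = Finset.univ.val) :
    ∃ σ : Equiv.Perm (Fin n), List.ofFn σ = l := by
  have hlen : l.length = n := by simpa using congrArg Multiset.card hl
  have hnodup : l.Nodup := Multiset.coe_nodup.1 (hl ▸ Finset.univ.nodup)
  have hinj : Function.Injective (l.get ∘ Fin.cast hlen.symm) :=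
    (List.nodup_iff_injective_get.1 hnodup).comp (Fin.cast_injective _)
  refine ⟨Equiv.ofBijective _ (Finite.injective_iff_bijective.1 hinj), ?_⟩
  exact List.ext_get (by simp [hlen]) fun i _ _ => by simp

theorem matching_tensor_congruent_mod_span_general [LieRing L] [LieAlgebra K L]
    [FiniteDimensional K L] [Invertible (2 : K)] {κ : LinearMap.BilinForm K L}
    (hκ : IsDoubleBracketForm κ) (hnondeg : κ.Nondegenerate) {n : ℕ}
    {s s' : Multiset (Fin n × Fin n)} (hs : endpoints s = Finset.univ.val)
    (hs' : endpoints s' = Finset.univ.val) {T T' : ⨂[K] _ : Fin n, L}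
    (hT : tensorPairing κ T = strutProd κ s) (hT' : tensorPairing κ T' = strutProd κ s')
    {t : Equiv.Perm (Fin n) → ⨂[K] _ : Fin n, L}
    (ht : ∀ σ, tensorPairing κ (t σ) = comb κ (List.ofFn σ)) :
    T - T' ∈ Submodule.span K (Set.range t) := by
  have hspan : combSpan κ Finset.univ.val ≤
      (Submodule.span K (Set.range t)).map (tensorPairing κ) := by
    refine Submodule.span_le.2 ?_
    rintro _ ⟨l, -, hl, rfl⟩
    obtain ⟨σ, rfl⟩ := exists_perm_ofFn_eq hl
    exact ⟨t σ, Submodule.subset_span ⟨σ, rfl⟩, ht σ⟩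
  have hmem := hκ.strutProd_sub_mem (hs.trans hs'.symm)
  rw [hs, ← hT, ← hT', ← map_sub] at hmem
  obtain ⟨y, hy, hyT⟩ := hspan hmem
  rwa [← tensorPairing_injective hnondeg hyT]

end TensorPairing

section Matchings

theorem strutProd_map_apply {R L ι β : Type*} [CommRing R] [LieRing L] [LieAlgebra R L] [Fintype β]
    (κ : LinearMap.BilinForm R L) (p : β → ι × ι) (x : ι → L) :
    strutProd κ (Finset.univ.val.map p) x = ∏ b, κ (x (p b).1) (x (p b).2) := by
  rw [strutProd, Multiset.map_map]
  exact Finset.prod_apply x Finset.univ _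

theorem endpoints_map_eq_univ {β ι : Type*} [Fintype β] [Fintype ι] {p : β → ι × ι}
    (hne : ∀ b, (p b).1 ≠ (p b).2) (hp : ∀ i, ∃! b, i = (p b).1 ∨ i = (p b).2) :
    endpoints (Finset.univ.val.map p) = Finset.univ.val := by
  have hmem (b : β) (i : ι) : i ∈ ({(p b).1, (p b).2} : Multiset ι) ↔
      i = (p b).1 ∨ i = (p b).2 := by simp
  rw [endpoints, Multiset.bind_map]
  refine (Multiset.Nodup.ext ?_ Finset.univ.nodup).2 fun i => ?_
  · refine Multiset.nodup_bind.2 ⟨fun b _ => by simpa using hne b, ?_⟩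
    refine Finset.univ.nodup.pairwise fun b _ c _ hbc => Multiset.disjoint_left.2 ?_
    exact fun {i} hib hic => hbc ((hp i).unique ((hmem b i).1 hib) ((hmem c i).1 hic))
  · obtain ⟨b, hi, -⟩ := hp i
    exact iff_of_true (Multiset.mem_bind.2 ⟨b, Finset.mem_univ b, (hmem b i).2 hi⟩)
      (Finset.mem_univ i)

theorem blockVal_eq_of_sort_eq (κ : LinearMap.BilinForm ℚ sl2) {n : ℕ} (x : Fin n → sl2)
    {B : Finset (Fin n)} {i j : Fin n} (hB : B.sort (· ≤ ·) = [i, j]) :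
    blockVal κ x B = κ (x i) (x j) := by
  simp [blockVal, hB, lBrk]

theorem exists_prod_blockVal_eq_strutProd {n : ℕ} {M : Finset (Finset (Fin n))}
    (hM : ∀ i, ∃! B, B ∈ M ∧ i ∈ B) (hcard : ∀ B ∈ M, B.card = 2) :
    ∃ s, endpoints s = Finset.univ.val ∧
      ∀ (κ : LinearMap.BilinForm ℚ sl2) x, ∏ B ∈ M, blockVal κ x B = strutProd κ s x := by
  have hsort (B : M) : ∃ p : Fin n × Fin n, B.1.sort (· ≤ ·) = [p.1, p.2] := by
    obtain ⟨i, j, hij⟩ := List.length_eq_two.1 ((B.1.length_sort (· ≤ ·)).trans (hcard B B.2))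
    exact ⟨(i, j), hij⟩
  choose p hp using hsort
  have hmem (i : Fin n) (B : M) : i ∈ B.1 ↔ i = (p B).1 ∨ i = (p B).2 := by
    rw [← Finset.mem_sort (· ≤ ·), hp B]
    simp
  refine ⟨Finset.univ.val.map p, endpoints_map_eq_univ (fun B => ?_) fun i => ?_, fun κ x => ?_⟩
  · simpa [hp B] using B.1.sort_nodup (· ≤ ·)
  · obtain ⟨B, ⟨hB, hi⟩, huniq⟩ := hM i
    exact ⟨⟨B, hB⟩, (hmem i _).1 hi, fun C hC => Subtype.ext (huniq C ⟨C.2, (hmem i C).2 hC⟩)⟩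
  · rw [strutProd_map_apply, ← Finset.prod_coe_sort]
    exact Finset.prod_congr rfl fun B _ => blockVal_eq_of_sort_eq κ x (hp B)

/-- The strut joining `2i` and `2i + 1`, that is the block `{2i + 1, 2i + 2}` of `P₀` in one-based
numbering. -/
def consecutivePair {m : ℕ} (i : Fin m) : Fin (2 * m) × Fin (2 * m) :=
  (⟨2 * i.1, by omega⟩, ⟨2 * i.1 + 1, by omega⟩)

theorem endpoints_map_consecutivePair (m : ℕ) :
    endpoints ((Finset.univ : Finset (Fin m)).val.map consecutivePair) = Finset.univ.val := by
  refine endpoints_map_eq_univ (fun i => by simp [consecutivePair]) fun j => ?_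
  refine ⟨⟨j.1 / 2, by omega⟩, ?_, fun i hi => ?_⟩
  · simp only [consecutivePair, Fin.ext_iff]
    omega
  · simp only [consecutivePair, Fin.ext_iff] at hi ⊢
    omega

end Matchings

section SpecialLinear

open LieAlgebra.SpecialLinear

attribute [local instance] LieRing.ofAssociativeRing

variable {R : Type*} [CommRing R]

variable (R) in
/-- The trace form `tr (a b)` on `sl₂`. -/
def sl2TraceForm : LinearMap.BilinForm R (sl (Fin 2) R) :=
  LinearMap.BilinForm.restrict
    ((LinearMap.mul R (Matrix (Fin 2) (Fin 2) R)).compr₂ (Matrix.traceLinearMap (Fin 2) R R))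
    (sl (Fin 2) R).toSubmodule

theorem sl2TraceForm_apply (a b : sl (Fin 2) R) : sl2TraceForm R a b = (a.1 * b.1).trace := rfl

theorem sl2_apply_one_one (a : sl (Fin 2) R) : a.1 1 1 = -a.1 0 0 := by
  have htrace : a.1.trace = 0 := a.2
  rw [Matrix.trace_fin_two] at htrace
  exact eq_neg_of_add_eq_zero_right htrace

theorem isDoubleBracketForm_sl2TraceForm : IsDoubleBracketForm (sl2TraceForm R) where
  isSymm := ⟨fun a b => Matrix.trace_mul_comm a.1 b.1⟩
  lie_lie a b c := by
    apply Subtype.ext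
    rw [sl_bracket, sl_bracket]
    ext i j
    fin_cases i <;> fin_cases j <;>
      simp [sl2TraceForm_apply, Matrix.trace_fin_two, Matrix.mul_apply,
        sl2_apply_one_one] <;> ring

theorem span_H_E_F : Submodule.span ℚ {H, E, F} = ⊤ := by
  refine eq_top_iff.2 fun a _ => Submodule.mem_span_triple.2 ⟨a.1 0 0, a.1 0 1, a.1 1 0, ?_⟩
  apply Subtype.ext
  ext i j
  fin_cases i <;> fin_cases j <;> simp [H, E, F, sl2_apply_one_one]

theorem eq_sl2TraceForm {κ : LinearMap.BilinForm ℚ sl2}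
    (hHH : κ H H = 2) (hEF : κ E F = 1) (hFE : κ F E = 1)
    (hHE : κ H E = 0) (hEH : κ E H = 0) (hHF : κ H F = 0) (hFH : κ F H = 0)
    (hEE : κ E E = 0) (hFF : κ F F = 0) : κ = sl2TraceForm ℚ := by
  refine LinearMap.ext_on span_H_E_F fun a ha => LinearMap.ext_on span_H_E_F fun b hb => ?_
  rw [sl2TraceForm_apply]
  rcases ha with rfl | rfl | rfl <;> rcases hb with rfl | rfl | rfl <;>
    simp only [hHH, hEF, hFE, hHE, hEH, hHF, hFH, hEE, hFF] <;>
    norm_num [H, E, F, Matrix.trace_fin_two]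

theorem nondegenerate_sl2TraceForm : (sl2TraceForm ℚ).Nondegenerate := by
  have hrefl := isDoubleBracketForm_sl2TraceForm.isSymm.isRefl (R := ℚ)
  refine hrefl.nondegenerate_iff_separatingLeft.2 fun a ha => ?_
  have h00 : a.1 0 0 = 0 := by
    simpa [sl2TraceForm_apply, H, Matrix.trace_fin_two, Matrix.mul_apply, sl2_apply_one_one]
      using ha H
  have h10 : a.1 1 0 = 0 := by
    simpa [sl2TraceForm_apply, E, Matrix.trace_fin_two, Matrix.mul_apply] using ha E
  have h01 : a.1 0 1 = 0 := by
    simpa [sl2TraceForm_apply, F, Matrix.trace_fin_two, Matrix.mul_apply] using ha F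
  apply Subtype.ext
  ext i j
  fin_cases i <;> fin_cases j <;> simp [sl2_apply_one_one, h00, h10, h01]

theorem apply_foldl_lie_eq_combFunctional (κ : LinearMap.BilinForm ℚ sl2) (a b : sl2)
    (l : List sl2) :
    κ ((b :: l).dropLast.foldl (fun y z => ⁅y, z⁆) a) ((b :: l).getLastD 0) =
      combFunctional κ (b :: l) a := by
  induction l generalizing a b with
  | nil => rfl
  | cons c l ih =>
    rw [combFunctional_cons_cons, ← ih]
    simp

theorem brkVal_eq_combForm (κ : LinearMap.BilinForm ℚ sl2) {k : ℕ} (x : Fin k → sl2) :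
    brkVal κ x = combForm κ (List.ofFn x) := by
  rw [brkVal]
  match List.ofFn x with
  | [] => simp [lBrk, combForm]
  | [a] => simp [lBrk, combForm, combFunctional]
  | a :: b :: l => exact apply_foldl_lie_eq_combFunctional κ a b l

end SpecialLinear

theorem matching_tensor_congruent_mod_span
    (κ : sl2 →ₗ[ℚ] sl2 →ₗ[ℚ] ℚ)
    (hHH : κ H H = 2) (hEF : κ E F = 1) (hFE : κ F E = 1)
    (hHE : κ H E = 0) (hEH : κ E H = 0) (hHF : κ H F = 0) (hFH : κ F H = 0)
    (hEE : κ E E = 0) (hFF : κ F F = 0) :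
    ∀ m, 2 ≤ m →
    ∀ M : Finset (Finset (Fin (2 * m))),
      IsPartitionGe2 (2 * m) M → (∀ B ∈ M, B.card = 2) →
    ∀ TM : TP (2 * m),
      (∀ x : Fin (2 * m) → sl2, pairT κ (2 * m) x TM = ∏ B ∈ M, blockVal κ x B) →
    ∀ T0 : TP (2 * m),
      (∀ x : Fin (2 * m) → sl2, pairT κ (2 * m) x T0 =
        ∏ i : Fin m, κ (x ⟨2 * i.1, by have := i.2; omega⟩)
          (x ⟨2 * i.1 + 1, by have := i.2; omega⟩)) →
    ∀ t : Equiv.Perm (Fin (2 * m)) → TP (2 * m),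
      (∀ σ (x : Fin (2 * m) → sl2), pairT κ (2 * m) x (t σ) = brkVal κ (x ∘ σ)) →
      TM - T0 ∈ Submodule.span ℚ (Set.range t) := by
  intro m _ M hM hcard TM hTM T0 hT0 t ht
  obtain rfl := eq_sl2TraceForm hHH hEF hFE hHE hEH hHF hFH hEE hFF
  obtain ⟨s, hs, hprod⟩ := exists_prod_blockVal_eq_strutProd hM.1 hcard
  refine matching_tensor_congruent_mod_span_general isDoubleBracketForm_sl2TraceForm
    nondegenerate_sl2TraceForm hs (endpoints_map_consecutivePair m) (funext fun x => ?_)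
    (funext fun x => ?_) fun σ => funext fun x => ?_
  · exact (hTM x).trans (hprod _ x)
  · exact (hT0 x).trans (strutProd_map_apply _ consecutivePair x).symm
  · refine (ht σ x).trans ?_
    rw [brkVal_eq_combForm, comb, List.map_ofFn]
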